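/- Let k be a field, Ω a commutative semigroup, A a k-vector space, and ≺_{α,β}, ≻_{α,β} : A × A → A ((α,β) ∈ Ω²) two families of k-bilinear operations. Let ≺, ≻ be k-bilinear operations on the tensor product A ⊗_k k[Ω] satisfying, on pure tensors, (x ⊗ α) ≺ (y ⊗ β) = (x ≺_{α,β} y) ⊗ αβ and (x ⊗ α) ≻ (y ⊗ β) = (x ≻_{α,β} y) ⊗ αβ for all x, y ∈ A and α, β ∈ Ω. Then (A ⊗_k k[Ω], ≺, ≻) is a pre-anti-flexible algebra if and only if (A, ≺_{α,β}, ≻_{α,β}, Ω) is an Ω-relative pre-anti-flexible algebra. -/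

import Mathlib

open TensorProduct

/-!
Only the basis of `k[Ω]` matters: let `b` be a basis, indexed by `Ω`, of a module `N`. Each
axiom equates a trilinear map `(X, Y, Z) ↦ (X ∘ Y) ∘ Z - X ∘ (Y ∘ Z)` with another one of this
shape after exchanging `X` and `Z`. On `x ⊗ b α`, `y ⊗ b β`, `z ⊗ b γ` both sides take values of
the form `a ⊗ b (αβγ)`, commutativity of `Ω` giving `γβα = αβγ` on the right. Trilinear maps on
`A ⊗ N` are determined by their values on such pure tensors, and `a` can be recovered from
`a ⊗ b δ`, so the axioms for `A ⊗ N` and those for `A` are equivalent one by one.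
-/

section Trilinear

variable {R M₁ M₂ M₃ M₁₂ M₂₃ P : Type*} [CommSemiring R]
  [AddCommMonoid M₁] [AddCommMonoid M₂] [AddCommMonoid M₃]
  [Module R M₁] [Module R M₂] [Module R M₃]

/-- The trilinear map `t` with its arguments in the reverse order `(z, y, x)`; the right-hand sides
of the axioms of pre-anti-flexible algebras are of this form. -/
def trilinearReverse [AddCommMonoid P] [Module R P] (t : M₁ →ₗ[R] M₂ →ₗ[R] M₃ →ₗ[R] P) :
    M₃ →ₗ[R] M₂ →ₗ[R] M₁ →ₗ[R] P :=
  (LinearMap.lflip.toLinearMap ∘ₗ t.flip).flip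

@[simp]
theorem trilinearReverse_apply [AddCommMonoid P] [Module R P]
    (t : M₁ →ₗ[R] M₂ →ₗ[R] M₃ →ₗ[R] P) (x : M₁) (y : M₂) (z : M₃) :
    trilinearReverse t z y x = t x y z :=
  rfl

variable [AddCommMonoid M₁₂] [AddCommMonoid M₂₃] [AddCommGroup P]
  [Module R M₁₂] [Module R M₂₃] [Module R P]

/-- The associator `(x, y, z) ↦ (x ∘₂ y) ∘₁ z - x ∘₃ (y ∘₄ z)` of four bilinear operations, as a
trilinear map. The axioms of pre-anti-flexible algebras are equations between associators of
`≺`, `≻` and `≻ + ≺`. -/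
def mixedAssociator (op₁ : M₁₂ →ₗ[R] M₃ →ₗ[R] P) (op₂ : M₁ →ₗ[R] M₂ →ₗ[R] M₁₂)
    (op₃ : M₁ →ₗ[R] M₂₃ →ₗ[R] P) (op₄ : M₂ →ₗ[R] M₃ →ₗ[R] M₂₃) :
    M₁ →ₗ[R] M₂ →ₗ[R] M₃ →ₗ[R] P :=
  op₂.compr₂ op₁ - (LinearMap.llcomp R M₃ M₂₃ P ∘ₗ op₃).compl₂ op₄

@[simp]
theorem mixedAssociator_apply (op₁ : M₁₂ →ₗ[R] M₃ →ₗ[R] P) (op₂ : M₁ →ₗ[R] M₂ →ₗ[R] M₁₂)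
    (op₃ : M₁ →ₗ[R] M₂₃ →ₗ[R] P) (op₄ : M₂ →ₗ[R] M₃ →ₗ[R] M₂₃) (x : M₁) (y : M₂) (z : M₃) :
    mixedAssociator op₁ op₂ op₃ op₄ x y z = op₁ (op₂ x y) z - op₃ x (op₄ y z) :=
  rfl

end Trilinear

section PreAntiFlexible

variable {R Ω A : Type*} [CommSemiring R] [Mul Ω] [AddCommGroup A] [Module R A]

/-- The axioms of a pre-anti-flexible algebra with operations `≺ = prec` and `≻ = succ`. -/
def IsPreAntiFlexible (prec succ : A →ₗ[R] A →ₗ[R] A) : Prop :=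
  (∀ x y z : A,
    prec (succ x y) z - succ x (prec y z) = prec (succ z y) x - succ z (prec y x)) ∧
  (∀ x y z : A,
    succ (succ x y + prec x y) z - succ x (succ y z) =
      prec (prec z y) x - prec z (succ y x + prec y x))

/-- The axioms of an `Ω`-relative pre-anti-flexible algebra with operations
`≺_{α,β} = prec α β` and `≻_{α,β} = succ α β`. -/
def IsRelativePreAntiFlexible (prec succ : Ω → Ω → A →ₗ[R] A →ₗ[R] A) : Prop :=
  (∀ (α β γ : Ω) (x y z : A),
    prec (α * β) γ (succ α β x y) z - succ α (β * γ) x (prec β γ y z) =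
      prec (γ * β) α (succ γ β z y) x - succ γ (β * α) z (prec β α y x)) ∧
  (∀ (α β γ : Ω) (x y z : A),
    succ (α * β) γ (prec α β x y + succ α β x y) z - succ α (β * γ) x (succ β γ y z) =
      prec (γ * β) α (prec γ β z y) x - prec γ (β * α) z (prec β α y x + succ β α y x))

/-- The `Ω`-relative form of `mixedAssociator`, for operations indexed by the degrees of their two
arguments: a family of trilinear maps indexed by the degrees of the three arguments. -/
def relativeAssociator (op₁ op₂ op₃ op₄ : Ω → Ω → A →ₗ[R] A →ₗ[R] A) (α β γ : Ω) :
    A →ₗ[R] A →ₗ[R] A →ₗ[R] A :=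
  mixedAssociator (op₁ (α * β) γ) (op₂ α β) (op₃ α (β * γ)) (op₄ β γ)

theorem isPreAntiFlexible_iff_mixedAssociator_eq (prec succ : A →ₗ[R] A →ₗ[R] A) :
    IsPreAntiFlexible prec succ ↔
      mixedAssociator prec succ succ prec =
          trilinearReverse (mixedAssociator prec succ succ prec) ∧
        mixedAssociator succ (succ + prec) succ succ =
          trilinearReverse (mixedAssociator prec prec prec (succ + prec)) := by
  simp only [IsPreAntiFlexible, LinearMap.ext_iff, trilinearReverse_apply, mixedAssociator_apply,
    LinearMap.add_apply]

theorem isRelativePreAntiFlexible_iff_relativeAssociator_eq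
    (prec succ : Ω → Ω → A →ₗ[R] A →ₗ[R] A) :
    IsRelativePreAntiFlexible prec succ ↔
      (∀ α β γ, relativeAssociator prec succ succ prec α β γ =
          trilinearReverse (relativeAssociator prec succ succ prec γ β α)) ∧
        ∀ α β γ, relativeAssociator succ (succ + prec) succ succ α β γ =
          trilinearReverse (relativeAssociator prec prec prec (succ + prec) γ β α) := by
  simp only [IsRelativePreAntiFlexible, relativeAssociator, LinearMap.ext_iff,
    trilinearReverse_apply, mixedAssociator_apply, Pi.add_apply, LinearMap.add_apply,
    add_comm (prec _ _ _ _) (succ _ _ _ _)]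

end PreAntiFlexible

section TensorBasis

variable {R Ω A N P : Type*} [CommSemiring R] [AddCommMonoid A] [Module R A]
  [AddCommMonoid N] [Module R N] [AddCommMonoid P] [Module R P] (b : Module.Basis Ω R N)

theorem tmul_basis_injective (α : Ω) : Function.Injective fun x : A ↦ x ⊗ₜ[R] b α := by
  classical
  intro x y hxy
  simpa using congr(TensorProduct.equivFinsuppOfBasisRight b $hxy α)

theorem linearMap_ext_tmul_basis {f g : A ⊗[R] N →ₗ[R] P}
    (h : ∀ x α, f (x ⊗ₜ b α) = g (x ⊗ₜ b α)) : f = g :=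
  TensorProduct.ext (LinearMap.ext fun x ↦ b.ext (h x))

end TensorBasis

section GradedExtension

variable {R Ω A N : Type*} [CommSemiring R] [AddCommMonoid N] [Module R N]

/-- The bilinear operation `F` on `A ⊗ N` restricts to
`(x ⊗ b α, y ⊗ b β) ↦ f α β x y ⊗ b (αβ)`, where the basis vector `b α` records the degree `α`. -/
def IsGradedBilinearExtension [Mul Ω] [AddCommMonoid A] [Module R A] (b : Module.Basis Ω R N)
    (f : Ω → Ω → A →ₗ[R] A →ₗ[R] A) (F : A ⊗[R] N →ₗ[R] A ⊗[R] N →ₗ[R] A ⊗[R] N) : Prop :=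
  ∀ (x y : A) (α β : Ω), F (x ⊗ₜ b α) (y ⊗ₜ b β) = f α β x y ⊗ₜ b (α * β)

/-- The trilinear analogue of `IsGradedBilinearExtension`. -/
def IsGradedTrilinearExtension [Mul Ω] [AddCommMonoid A] [Module R A] (b : Module.Basis Ω R N)
    (t : Ω → Ω → Ω → A →ₗ[R] A →ₗ[R] A →ₗ[R] A)
    (T : A ⊗[R] N →ₗ[R] A ⊗[R] N →ₗ[R] A ⊗[R] N →ₗ[R] A ⊗[R] N) : Prop :=
  ∀ (x y z : A) (α β γ : Ω),
    T (x ⊗ₜ b α) (y ⊗ₜ b β) (z ⊗ₜ b γ) = t α β γ x y z ⊗ₜ b (α * β * γ)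

variable {b : Module.Basis Ω R N}

theorem IsGradedBilinearExtension.add [Mul Ω] [AddCommMonoid A] [Module R A]
    {f g : Ω → Ω → A →ₗ[R] A →ₗ[R] A} {F G : A ⊗[R] N →ₗ[R] A ⊗[R] N →ₗ[R] A ⊗[R] N}
    (hF : IsGradedBilinearExtension b f F) (hG : IsGradedBilinearExtension b g G) :
    IsGradedBilinearExtension b (f + g) (F + G) := fun x y α β ↦ by
  simp only [LinearMap.add_apply, Pi.add_apply, hF x y α β, hG x y α β, TensorProduct.add_tmul]

theorem IsGradedBilinearExtension.associator [Semigroup Ω] [AddCommGroup A] [Module R A]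
    {f₁ f₂ f₃ f₄ : Ω → Ω → A →ₗ[R] A →ₗ[R] A}
    {F₁ F₂ F₃ F₄ : A ⊗[R] N →ₗ[R] A ⊗[R] N →ₗ[R] A ⊗[R] N}
    (h₁ : IsGradedBilinearExtension b f₁ F₁) (h₂ : IsGradedBilinearExtension b f₂ F₂)
    (h₃ : IsGradedBilinearExtension b f₃ F₃) (h₄ : IsGradedBilinearExtension b f₄ F₄) :
    IsGradedTrilinearExtension b (relativeAssociator f₁ f₂ f₃ f₄)
      (mixedAssociator F₁ F₂ F₃ F₄) := fun x y z α β γ ↦ by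
  simp only [relativeAssociator, mixedAssociator_apply, h₁ _ _ _ _, h₂ _ _ _ _, h₃ _ _ _ _,
    h₄ _ _ _ _, ← mul_assoc, TensorProduct.sub_tmul]

theorem IsGradedTrilinearExtension.reverse [CommSemigroup Ω] [AddCommMonoid A] [Module R A]
    {t : Ω → Ω → Ω → A →ₗ[R] A →ₗ[R] A →ₗ[R] A}
    {T : A ⊗[R] N →ₗ[R] A ⊗[R] N →ₗ[R] A ⊗[R] N →ₗ[R] A ⊗[R] N}
    (hT : IsGradedTrilinearExtension b t T) :
    IsGradedTrilinearExtension b (fun α β γ ↦ trilinearReverse (t γ β α))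
      (trilinearReverse T) := fun x y z α β γ ↦ by
  have degree_eq : γ * β * α = α * β * γ := by rw [mul_comm, mul_comm γ, mul_assoc]
  rw [trilinearReverse_apply, trilinearReverse_apply, hT, degree_eq]

theorem IsGradedTrilinearExtension.eq_iff [Mul Ω] [AddCommMonoid A] [Module R A]
    {t u : Ω → Ω → Ω → A →ₗ[R] A →ₗ[R] A →ₗ[R] A}
    {T U : A ⊗[R] N →ₗ[R] A ⊗[R] N →ₗ[R] A ⊗[R] N →ₗ[R] A ⊗[R] N}
    (hT : IsGradedTrilinearExtension b t T) (hU : IsGradedTrilinearExtension b u U) :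
    T = U ↔ ∀ α β γ, t α β γ = u α β γ := by
  constructor
  · rintro rfl α β γ
    ext x y z
    exact tmul_basis_injective b (α * β * γ) ((hT x y z α β γ).symm.trans (hU x y z α β γ))
  · intro h
    refine linearMap_ext_tmul_basis b fun x α ↦ linearMap_ext_tmul_basis b fun y β ↦
      linearMap_ext_tmul_basis b fun z γ ↦ ?_
    rw [hT, hU, h]

end GradedExtension

theorem relativePreAntiFlexible_iff_tensor_preAntiFlexible_general
    {R Ω A N : Type*} [CommSemiring R] [CommSemigroup Ω] [AddCommGroup A] [Module R A]
    [AddCommMonoid N] [Module R N] {b : Module.Basis Ω R N}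
    {prec succ : Ω → Ω → A →ₗ[R] A →ₗ[R] A} {P S : A ⊗[R] N →ₗ[R] A ⊗[R] N →ₗ[R] A ⊗[R] N}
    (hP : IsGradedBilinearExtension b prec P) (hS : IsGradedBilinearExtension b succ S) :
    IsPreAntiFlexible P S ↔ IsRelativePreAntiFlexible prec succ := by
  have hSP : IsGradedBilinearExtension b (succ + prec) (S + P) := hS.add hP
  have middle := hP.associator hS hS hP
  have left := hS.associator hSP hS hS
  have right := hP.associator hP hP hSP
  rw [isPreAntiFlexible_iff_mixedAssociator_eq,
    isRelativePreAntiFlexible_iff_relativeAssociator_eq]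
  exact and_congr (middle.eq_iff middle.reverse) (left.eq_iff right.reverse)

/-- `(A ⊗ k[Ω], ≺, ≻)` with `(x⊗α) ≺ (y⊗β) = (x ≺_{α,β} y) ⊗ αβ`
and `(x⊗α) ≻ (y⊗β) = (x ≻_{α,β} y) ⊗ αβ` is a pre-anti-flexible algebra iff
`(A, ≺_{α,β}, ≻_{α,β}, Ω)` is an Ω-relative pre-anti-flexible algebra. -/
theorem relativePreAntiFlexible_iff_tensor_preAntiFlexible
    (k : Type*) [Field k] (Ω : Type*) [CommSemigroup Ω]
    (A : Type*) [AddCommGroup A] [Module k A]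
    (prec succ : Ω → Ω → A →ₗ[k] A →ₗ[k] A)
    (P S : A ⊗[k] MonoidAlgebra k Ω →ₗ[k]
      A ⊗[k] MonoidAlgebra k Ω →ₗ[k] A ⊗[k] MonoidAlgebra k Ω)
    (hP : ∀ (x y : A) (α β : Ω),
      P (x ⊗ₜ MonoidAlgebra.single α (1 : k)) (y ⊗ₜ MonoidAlgebra.single β (1 : k)) =
        (prec α β x y) ⊗ₜ MonoidAlgebra.single (α * β) (1 : k))
    (hS : ∀ (x y : A) (α β : Ω),
      S (x ⊗ₜ MonoidAlgebra.single α (1 : k)) (y ⊗ₜ MonoidAlgebra.single β (1 : k)) =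
        (succ α β x y) ⊗ₜ MonoidAlgebra.single (α * β) (1 : k)) :
    ((∀ X Y Z : A ⊗[k] MonoidAlgebra k Ω,
        P (S X Y) Z - S X (P Y Z) = P (S Z Y) X - S Z (P Y X)) ∧
     (∀ X Y Z : A ⊗[k] MonoidAlgebra k Ω,
        S (S X Y + P X Y) Z - S X (S Y Z) =
          P (P Z Y) X - P Z (S Y X + P Y X))) ↔
    ((∀ (α β γ : Ω) (x y z : A),
        prec (α * β) γ (succ α β x y) z - succ α (β * γ) x (prec β γ y z) =
          prec (γ * β) α (succ γ β z y) x - succ γ (β * α) z (prec β α y x)) ∧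
     (∀ (α β γ : Ω) (x y z : A),
        succ (α * β) γ (prec α β x y + succ α β x y) z -
            succ α (β * γ) x (succ β γ y z) =
          prec (γ * β) α (prec γ β z y) x -
            prec γ (β * α) z (prec β α y x + succ β α y x))) :=
  relativePreAntiFlexible_iff_tensor_preAntiFlexible_general
    (b := MonoidAlgebra.basis Ω k) hP hS
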